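/- ℝⁿ and ℝᵐ are not homeomorphic unless n = m. -/

import Mathlib

open MeasureTheory Metric Set Filter Topology Polynomial Module

/-!
A continuous injection `f : E → F` has a continuous left inverse `g : F → E` on a closed ball, by
compactness and Tietze's theorem. Smoothing `f` and `g` makes `h = g ∘ f` a `C¹` map which is
uniformly close to the identity on that ball. Such an `h` has a point where its derivative is
invertible; as the derivative factors through `F`, this gives `dim E ≤ dim F`.

The invertible point comes from a degree argument. Cut `h` off to `x ↦ x + u x` with `u` compactly
supported. The integral of `det (1 + t Du(x)) * p (‖x + t u(x)‖²)` is a polynomial in `t`; it is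
constant for small `t` by change of variables, hence constant. Comparing `t = 1` with `t = 0`, the
polynomial `p` can be replaced by any continuous function, by Weierstrass' theorem, and in
particular by one for which the weight `p (‖·‖²)` is supported near the origin.
-/

section PolynomialDependence

variable {X : Type*} [TopologicalSpace X]

lemma exists_polynomial_eval_eq_setIntegral [MeasurableSpace X] [OpensMeasurableSpace X] [T2Space X]
    (μ : Measure X) [IsFiniteMeasureOnCompacts μ] {K : Set X} (hK : IsCompact K)
    (P : C(X, ℝ)[X]) :
    ∃ Q : ℝ[X], ∀ t : ℝ, Q.eval t = ∫ x in K, P.eval (algebraMap ℝ C(X, ℝ) t) x ∂μ := by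
  refine ⟨∑ i ∈ P.support, monomial i (∫ x in K, P.coeff i x ∂μ), fun t ↦ ?_⟩
  have integrable_term (i : ℕ) : IntegrableOn (fun x ↦ P.coeff i x * t ^ i) K μ :=
    ContinuousOn.integrableOn_compact hK (by fun_prop)
  have eval_apply (x : X) :
      P.eval (algebraMap ℝ C(X, ℝ) t) x = ∑ i ∈ P.support, P.coeff i x * t ^ i := by
    simp [eval_eq_sum, Polynomial.sum]
  simp only [eval_apply, eval_finsetSum, eval_monomial, ← integral_mul_const]
  exact (integral_finsetSum _ fun i _ ↦ integrable_term i).symm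

lemma exists_polynomial_eval_eq_det {E : Type*} [NormedAddCommGroup E] [NormedSpace ℝ E]
    [FiniteDimensional ℝ E] {A : X → E →L[ℝ] E} (hA : Continuous A) :
    ∃ P : C(X, ℝ)[X], ∀ (t : ℝ) (x : X),
      P.eval (algebraMap ℝ C(X, ℝ) t) x = (ContinuousLinearMap.id ℝ E + t • A x).det := by
  let b := finBasis ℝ E
  have continuous_entry (i j) : Continuous fun x ↦ b.repr (A x (b j)) i :=
    (LinearMap.continuous_of_finiteDimensional (b.coord i)).comp (by fun_prop)
  let M : Matrix _ _ C(X, ℝ) := Matrix.of fun i j ↦ ⟨_, continuous_entry i j⟩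
  refine ⟨(1 + (Polynomial.X : C(X, ℝ)[X]) • M.map C).det, fun t x ↦ ?_⟩
  let φ : C(X, ℝ)[X] →+* ℝ :=
    (ContinuousMap.evalAlgHom ℝ ℝ x : C(X, ℝ) →+* ℝ).comp (evalRingHom (algebraMap ℝ C(X, ℝ) t))
  change φ _ = _
  rw [RingHom.map_det, ContinuousLinearMap.det, ← LinearMap.det_toMatrix b]
  congr 1
  ext i j
  rcases eq_or_ne i j with rfl | hij
  · simp [φ, M, LinearMap.toMatrix_apply, mul_comm t]
  · simp [φ, M, LinearMap.toMatrix_apply, hij, mul_comm t]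

lemma exists_polynomial_eval_eq_norm_sq {E : Type*} [NormedAddCommGroup E] [InnerProductSpace ℝ E]
    {a v : X → E} (ha : Continuous a) (hv : Continuous v) :
    ∃ P : C(X, ℝ)[X], ∀ (t : ℝ) (x : X),
      P.eval (algebraMap ℝ C(X, ℝ) t) x = ‖a x + t • v x‖ ^ 2 := by
  let A : C(X, ℝ) := ⟨fun x ↦ ‖a x‖ ^ 2, by fun_prop⟩
  let B : C(X, ℝ) := ⟨fun x ↦ 2 * inner ℝ (a x) (v x), by fun_prop⟩
  let D : C(X, ℝ) := ⟨fun x ↦ ‖v x‖ ^ 2, by fun_prop⟩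
  refine ⟨C A + C B * Polynomial.X + C D * Polynomial.X ^ 2, fun t x ↦ ?_⟩
  rw [norm_add_sq_real, inner_smul_right, norm_smul, mul_pow, Real.norm_eq_abs, sq_abs]
  simp [A, B, D]
  ring

end PolynomialDependence

lemma norm_setIntegral_mul_sub_mul_le {X : Type*} [MeasurableSpace X] {μ : Measure X} {K : Set X}
    (hK : μ K < ⊤) {v w α β : X → ℝ} {ε M : ℝ} (hε : 0 ≤ ε) (hM : ∀ x ∈ K, ‖v x‖ + ‖w x‖ ≤ M)
    (hα : ∀ x ∈ K, ‖α x‖ ≤ ε) (hβ : ∀ x ∈ K, ‖β x‖ ≤ ε) :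
    ‖∫ x in K, (v x * α x - w x * β x) ∂μ‖ ≤ ε * M * μ.real K := by
  refine norm_setIntegral_le_of_norm_le_const hK fun x hx ↦ ?_
  calc ‖v x * α x - w x * β x‖
      ≤ ‖v x‖ * ‖α x‖ + ‖w x‖ * ‖β x‖ := by
        simpa only [norm_mul] using norm_sub_le (v x * α x) (w x * β x)
    _ ≤ ‖v x‖ * ε + ‖w x‖ * ε := by gcongr <;> [exact hα x hx; exact hβ x hx]
    _ = ε * (‖v x‖ + ‖w x‖) := by ring
    _ ≤ ε * M := by gcongr; exact hM x hx

lemma setIntegral_mul_comp_eq_of_forall_polynomial {X : Type*} [TopologicalSpace X]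
    [MeasurableSpace X] [OpensMeasurableSpace X] [T2Space X] {μ : Measure X}
    [IsFiniteMeasureOnCompacts μ] {K : Set X} (hK : IsCompact K) {a b v w : X → ℝ}
    (ha : ContinuousOn a K) (hb : ContinuousOn b K) (hv : ContinuousOn v K) (hw : ContinuousOn w K)
    (h : ∀ p : ℝ[X], ∫ x in K, v x * p.eval (a x) ∂μ = ∫ x in K, w x * p.eval (b x) ∂μ)
    {θ : ℝ → ℝ} (hθ : Continuous θ) :
    ∫ x in K, v x * θ (a x) ∂μ = ∫ x in K, w x * θ (b x) ∂μ := by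
  have integrable {c d : X → ℝ} (hc : ContinuousOn c K) (hd : ContinuousOn d K) {φ : ℝ → ℝ}
      (hφ : Continuous φ) : IntegrableOn (fun x ↦ c x * φ (d x)) K μ :=
    ContinuousOn.integrableOn_compact hK (by fun_prop)
  obtain ⟨R, hR⟩ := ((hK.image_of_continuousOn ha).union
    (hK.image_of_continuousOn hb)).isBounded.subset_closedBall 0
  rw [Real.closedBall_eq_Icc, union_subset_iff, image_subset_iff, image_subset_iff] at hR
  obtain ⟨M, hM⟩ : ∃ M, ∀ x ∈ K, ‖v x‖ + ‖w x‖ ≤ M :=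
    (hK.bddAbove_image (hv.norm.add hw.norm)).imp fun _ h ↦ forall_mem_image.1 h
  have bound (ε : ℝ) (hε : 0 < ε) :
      ‖∫ x in K, v x * θ (a x) ∂μ - ∫ x in K, w x * θ (b x) ∂μ‖ ≤ ε * M * μ.real K := by
    obtain ⟨p, hp⟩ :=
      exists_polynomial_near_of_continuousOn (0 - R) (0 + R) θ hθ.continuousOn ε hε
    have hp' (s : ℝ) (hs : s ∈ Icc (0 - R) (0 + R)) : ‖θ s - p.eval s‖ ≤ ε := by
      simpa only [Real.norm_eq_abs, abs_sub_comm] using (hp s hs).le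
    have error_eq : ∫ x in K, v x * θ (a x) ∂μ - ∫ x in K, w x * θ (b x) ∂μ =
        ∫ x in K, (v x * (θ (a x) - p.eval (a x)) - w x * (θ (b x) - p.eval (b x))) ∂μ := by
      have hθp : Continuous fun s ↦ θ s - p.eval s := by fun_prop
      rw [integral_sub (integrable hv ha hθp) (integrable hw hb hθp)]
      simp only [mul_sub]
      rw [integral_sub (integrable hv ha hθ) (integrable hv ha p.continuous),
        integral_sub (integrable hw hb hθ) (integrable hw hb p.continuous), h p]
      ring
    rw [error_eq]
    exact norm_setIntegral_mul_sub_mul_le hK.measure_lt_top hε.le hM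
      (fun x hx ↦ hp' _ (hR.1 hx)) fun x hx ↦ hp' _ (hR.2 hx)
  have tendsto_bound : Tendsto (fun ε : ℝ ↦ ε * M * μ.real K) (𝓝[>] 0) (𝓝 0) :=
    tendsto_nhdsWithin_of_tendsto_nhds (Continuous.tendsto' (by fun_prop) _ _ (by simp))
  refine sub_eq_zero.1 (norm_le_zero_iff.1 (ge_of_tendsto tendsto_bound ?_))
  exact eventually_mem_nhdsWithin.mono bound

section ChangeOfVariables

lemma bijective_id_add_of_lipschitzWith {E : Type*} [NormedAddCommGroup E] [CompleteSpace E]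
    {v : E → E} {c : NNReal} (hv : LipschitzWith c v) (hc : c < 1) :
    Function.Bijective fun x ↦ x + v x := by
  refine (Function.bijective_iff_existsUnique _).2 fun y ↦ ?_
  have hcontr : ContractingWith c fun x ↦ y - v x :=
    ⟨hc, by simpa using (LipschitzWith.const y).sub hv⟩
  have solves_iff (x : E) : x + v x = y ↔ Function.IsFixedPt (fun x ↦ y - v x) x := by
    rw [Function.IsFixedPt, sub_eq_iff_eq_add, eq_comm]
  simp only [solves_iff]
  exact ⟨_, hcontr.fixedPoint_isFixedPt, fun _ ↦ hcontr.fixedPoint_unique⟩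

variable {E : Type*} [NormedAddCommGroup E] [NormedSpace ℝ E] [FiniteDimensional ℝ E]
  [MeasurableSpace E] [BorelSpace E] (μ : Measure E) [μ.IsAddHaarMeasure]
  {u : E → E} {K : Set E}

lemma setIntegral_det_mul_comp_of_bijective {f : E → E} {f' : E → E →L[ℝ] E}
    (hf : ∀ x, HasFDerivAt f (f' x) x) (hbij : Function.Bijective f) (hfix : EqOn f id Kᶜ)
    (hK : MeasurableSet K) (hdet : ∀ x ∈ K, 0 < (f' x).det) (φ : E → ℝ) :
    ∫ x in K, (f' x).det * φ (f x) ∂μ = ∫ x in K, φ x ∂μ := by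
  have image_eq : f '' K = K :=
    compl_injective ((image_compl_eq hbij).symm.trans hfix.image_eq_self)
  calc ∫ x in K, (f' x).det * φ (f x) ∂μ
      = ∫ x in K, |(f' x).det| • φ (f x) ∂μ :=
        setIntegral_congr_fun hK fun x hx ↦ by simp only [abs_of_pos (hdet x hx), smul_eq_mul]
    _ = ∫ x in f '' K, φ x ∂μ :=
        (integral_image_eq_integral_abs_det_fderiv_smul μ hK
          (fun x _ ↦ (hf x).hasFDerivWithinAt) hbij.injective.injOn φ).symm
    _ = ∫ x in K, φ x ∂μ := by rw [image_eq]

lemma eventually_setIntegral_det_id_add_smul_fderiv_mul (hu : ContDiff ℝ 1 u) (hK : IsCompact K)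
    (huK : ∀ x ∉ K, u x = 0) (φ : E → ℝ) :
    ∀ᶠ t : ℝ in 𝓝 0,
      ∫ x in K, (ContinuousLinearMap.id ℝ E + t • fderiv ℝ u x).det * φ (x + t • u x) ∂μ =
        ∫ x in K, φ x ∂μ := by
  obtain ⟨c, hc⟩ := hu.lipschitzWith_of_hasCompactSupport (HasCompactSupport.intro hK huK)
    one_ne_zero
  have := hu.continuous_fderiv one_ne_zero
  have hsmall : ∀ᶠ t : ℝ in 𝓝 0, ‖t‖₊ * c < 1 :=
    (Continuous.tendsto (by fun_prop) 0).eventually_lt_const (by simp)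
  have hdet : ∀ᶠ t : ℝ in 𝓝 0, ∀ x ∈ K,
      0 < (ContinuousLinearMap.id ℝ E + t • fderiv ℝ u x).det := by
    have hcont : Continuous fun z : ℝ × E ↦
        (ContinuousLinearMap.id ℝ E + z.1 • fderiv ℝ u z.2).det :=
      ContinuousLinearMap.continuous_det.comp (by fun_prop)
    exact hK.eventually_forall_of_forall_eventually fun x _ ↦
      (hcont.tendsto (0, x)).eventually_const_lt (by simp [ContinuousLinearMap.det])
  filter_upwards [hsmall, hdet] with t ht hdet_t
  refine setIntegral_det_mul_comp_of_bijective μ (fun x ↦ ?_)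
    (bijective_id_add_of_lipschitzWith ((lipschitzWith_smul t).comp hc) ht)
    (fun x hx ↦ by simp [huK x hx]) hK.measurableSet hdet_t φ
  exact (hasFDerivAt_id x).add ((hu.differentiable one_ne_zero x).hasFDerivAt.const_smul t)

end ChangeOfVariables

section Degree

variable {E : Type*} [NormedAddCommGroup E] [InnerProductSpace ℝ E] [FiniteDimensional ℝ E]
  {u : E → E}

lemma setIntegral_det_id_add_fderiv_mul_polynomial [MeasurableSpace E] [BorelSpace E]
    (μ : Measure E) [μ.IsAddHaarMeasure] (hu : ContDiff ℝ 1 u) {K : Set E} (hK : IsCompact K)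
    (huK : ∀ x ∉ K, u x = 0) (p : ℝ[X]) :
    ∫ x in K, (ContinuousLinearMap.id ℝ E + fderiv ℝ u x).det * p.eval (‖x + u x‖ ^ 2) ∂μ =
      ∫ x in K, p.eval (‖x‖ ^ 2) ∂μ := by
  obtain ⟨D, hD⟩ := exists_polynomial_eval_eq_det (hu.continuous_fderiv one_ne_zero)
  obtain ⟨N, hN⟩ := exists_polynomial_eval_eq_norm_sq continuous_id hu.continuous
  have integrand (t : ℝ) (x : E) :
      (D * aeval N p).eval (algebraMap ℝ C(E, ℝ) t) x =
        (ContinuousLinearMap.id ℝ E + t • fderiv ℝ u x).det * p.eval (‖x + t • u x‖ ^ 2) := by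
    let φ : C(E, ℝ)[X] →ₐ[ℝ] ℝ := (ContinuousMap.evalAlgHom ℝ ℝ x).comp
      ((aeval (algebraMap ℝ C(E, ℝ) t) : C(E, ℝ)[X] →ₐ[C(E, ℝ)] C(E, ℝ)).restrictScalars ℝ)
    calc φ (D * aeval N p) = φ D * p.eval (φ N) := by
          rw [map_mul, ← aeval_algHom_apply, coe_aeval_eq_eval]
      _ = _ := congr_arg₂ (· * p.eval ·) (hD t x) (hN t x)
  obtain ⟨Q, hQ⟩ := exists_polynomial_eval_eq_setIntegral μ hK (D * aeval N p)
  simp only [integrand] at hQ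
  have Q_eq_C : Q = C (∫ x in K, p.eval (‖x‖ ^ 2) ∂μ) := by
    refine eq_of_infinite_eval_eq _ _ ((infinite_of_mem_nhds 0
      (eventually_setIntegral_det_id_add_smul_fderiv_mul μ hu hK huK
        fun x ↦ p.eval (‖x‖ ^ 2))).mono fun t ht ↦ ?_)
    simpa only [mem_ofPred_eq, hQ, eval_C] using ht
  simpa only [Q_eq_C, eval_C, one_smul] using (hQ 1).symm

lemma setIntegral_det_id_add_fderiv_mul [MeasurableSpace E] [BorelSpace E]
    (μ : Measure E) [μ.IsAddHaarMeasure] (hu : ContDiff ℝ 1 u) {K : Set E} (hK : IsCompact K)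
    (huK : ∀ x ∉ K, u x = 0) {θ : ℝ → ℝ} (hθ : Continuous θ) :
    ∫ x in K, (ContinuousLinearMap.id ℝ E + fderiv ℝ u x).det * θ (‖x + u x‖ ^ 2) ∂μ =
      ∫ x in K, θ (‖x‖ ^ 2) ∂μ := by
  have := hu.continuous_fderiv one_ne_zero
  have hdet : Continuous fun x ↦ (ContinuousLinearMap.id ℝ E + fderiv ℝ u x).det :=
    ContinuousLinearMap.continuous_det.comp (by fun_prop)
  have hsq : Continuous fun x ↦ ‖x + u x‖ ^ 2 := (continuous_id.add hu.continuous).norm.pow 2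
  simpa only [one_mul] using setIntegral_mul_comp_eq_of_forall_polynomial hK hsq.continuousOn
    (b := fun x ↦ ‖x‖ ^ 2) (by fun_prop) hdet.continuousOn (continuousOn_const (c := 1))
    (fun p ↦ by
      simpa only [one_mul] using setIntegral_det_id_add_fderiv_mul_polynomial μ hu hK huK p) hθ

lemma exists_norm_add_lt_and_det_id_add_fderiv_ne_zero (hu : ContDiff ℝ 1 u)
    (hcs : HasCompactSupport u) {ρ : ℝ} (hρ : 0 < ρ) :
    ∃ x, ‖x + u x‖ < ρ ∧ (ContinuousLinearMap.id ℝ E + fderiv ℝ u x).det ≠ 0 := by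
  borelize E
  let μ : Measure E := volume
  obtain ⟨R, hR, htsupport⟩ := hcs.isCompact.isBounded.subset_closedBall_lt 0 0
  have hK := isCompact_closedBall (0 : E) R
  let θ : ℝ → ℝ := fun s ↦ max 0 (ρ ^ 2 - s)
  have hθ : Continuous θ := by fun_prop
  have θ_nonneg (s : ℝ) : 0 ≤ θ s := le_max_left _ _
  have θ_eq_zero {y : E} (hy : ρ ≤ ‖y‖) : θ (‖y‖ ^ 2) = 0 :=
    max_eq_left (by have := pow_le_pow_left₀ hρ.le hy 2; linarith)
  have θ_pos {y : E} (hy : ‖y‖ < ρ) : 0 < θ (‖y‖ ^ 2) :=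
    lt_max_of_lt_right (sub_pos.2 (by gcongr))
  by_contra! hdet
  have integral_eq_zero : ∫ x in closedBall (0 : E) R, θ (‖x‖ ^ 2) ∂μ = 0 := by
    rw [← setIntegral_det_id_add_fderiv_mul μ hu hK
      (fun x hx ↦ image_eq_zero_of_notMem_tsupport fun h ↦ hx (htsupport h)) hθ]
    refine integral_eq_zero_of_ae (Eventually.of_forall fun x ↦ ?_)
    rcases lt_or_ge ‖x + u x‖ ρ with hx | hx
    · simp [hdet x hx]
    · simp [θ_eq_zero hx]
  have integral_pos : 0 < ∫ x in closedBall (0 : E) R, θ (‖x‖ ^ 2) ∂μ := by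
    rw [setIntegral_pos_iff_support_of_nonneg_ae
      (Eventually.of_forall fun x ↦ θ_nonneg (‖x‖ ^ 2))
      (ContinuousOn.integrableOn_compact hK (by fun_prop))]
    refine (measure_ball_pos μ 0 (lt_min hρ hR)).trans_le (measure_mono fun x hx ↦ ?_)
    rw [mem_ball_zero_iff, lt_min_iff] at hx
    exact ⟨(θ_pos hx.1).ne', mem_closedBall_zero_iff.2 hx.2.le⟩
  exact integral_pos.ne' integral_eq_zero

lemma exists_det_fderiv_ne_zero_of_norm_sub_le {h : E → E} (hh : ContDiff ℝ 1 h) {ε r : ℝ}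
    (hr : 0 < r) (hεr : ε < r) (hclose : ∀ x ∈ closedBall 0 r, ‖h x - x‖ ≤ ε) :
    ∃ x ∈ ball 0 r, (fderiv ℝ h x).det ≠ 0 := by
  have hε : 0 ≤ ε := (norm_nonneg _).trans (hclose 0 (mem_closedBall_self hr.le))
  obtain ⟨s, hεs, hsr⟩ := exists_between hεr
  let χ : ContDiffBump (0 : E) := ⟨s, r, hε.trans_lt hεs, hsr⟩
  let u : E → E := fun x ↦ χ x • (h x - x)
  have norm_u_le (x : E) : ‖u x‖ ≤ ε := by
    by_cases hx : x ∈ closedBall 0 r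
    · rw [norm_smul, Real.norm_of_nonneg χ.nonneg]
      exact (mul_le_of_le_one_left (norm_nonneg _) χ.le_one).trans (hclose x hx)
    · have hχ : χ x = 0 := χ.zero_of_le_dist (not_le.1 hx).le
      simpa [u, hχ] using hε
  obtain ⟨x, hx, hdet⟩ := exists_norm_add_lt_and_det_id_add_fderiv_ne_zero (u := u)
    (χ.contDiff.smul (hh.sub contDiff_id)) χ.hasCompactSupport.smul_right (sub_pos.2 hεs)
  have hxs : x ∈ ball 0 s := by
    rw [mem_ball_zero_iff]
    linarith [norm_u_le x, norm_sub_le_norm_add x (u x)]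
  have u_eventuallyEq : u =ᶠ[𝓝 x] fun y ↦ h y - y := by
    filter_upwards [isOpen_ball.mem_nhds hxs] with y hy
    simp only [u, χ.one_of_mem_closedBall (ball_subset_closedBall hy), one_smul]
  have fderiv_u : fderiv ℝ u x = fderiv ℝ h x - ContinuousLinearMap.id ℝ E := by
    rw [u_eventuallyEq.fderiv_eq]
    exact ((hh.differentiable one_ne_zero x).hasFDerivAt.sub (hasFDerivAt_id x)).fderiv
  exact ⟨x, ball_subset_ball hsr.le hxs, by rwa [fderiv_u, add_sub_cancel] at hdet⟩

end Degree

section Dimension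

universe u v

lemma finrank_le_finrank_of_det_comp_ne_zero {k V W : Type*} [Field k] [AddCommGroup V] [Module k V]
    [FiniteDimensional k V] [AddCommGroup W] [Module k W] [FiniteDimensional k W]
    {g : W →ₗ[k] V} {f : V →ₗ[k] W}
    (h : (g ∘ₗ f).det ≠ 0) : finrank k V ≤ finrank k W := by
  have hgf : Function.Injective (g ∘ f) := (LinearMap.equivOfDetNeZero (g ∘ₗ f) h).injective
  exact LinearMap.finrank_le_finrank_of_injective hgf.of_comp

lemma exists_contDiff_comp_norm_sub_le {E F : Type*} [NormedAddCommGroup E] [NormedSpace ℝ E]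
    [FiniteDimensional ℝ E] [NormedAddCommGroup F] [NormedSpace ℝ F] [FiniteDimensional ℝ F]
    {f : E → F} {g : F → E} (hf : Continuous f) (hg : Continuous g) {K : Set E} (hK : IsCompact K)
    (hgf : LeftInvOn g f K) {ε : ℝ} (hε : 0 < ε) :
    ∃ (f₁ : E → F) (g₁ : F → E), ContDiff ℝ 1 f₁ ∧ ContDiff ℝ 1 g₁ ∧
      ∀ x ∈ K, ‖g₁ (f₁ x) - x‖ ≤ ε := by
  have hunif := (hK.image hf).uniformContinuousAt_of_continuousAt g
    (fun _ _ ↦ hg.continuousAt) (dist_mem_uniformity (half_pos hε))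
  obtain ⟨δ, hδ, hgδ⟩ := mem_uniformity_dist.1 hunif
  obtain ⟨f₁, hf₁, hf₁f, -⟩ :=
    hf.exists_contDiff_approx 1 (ε := fun _ ↦ δ) continuous_const fun _ ↦ hδ
  obtain ⟨g₁, hg₁, hg₁g, -⟩ :=
    hg.exists_contDiff_approx 1 (ε := fun _ ↦ ε / 2) continuous_const fun _ ↦ half_pos hε
  refine ⟨f₁, g₁, by exact_mod_cast hf₁, by exact_mod_cast hg₁, fun x hx ↦ ?_⟩
  have hgf₁ : dist (g (f x)) (g (f₁ x)) < ε / 2 :=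
    hgδ (dist_comm (f₁ x) (f x) ▸ hf₁f x) (mem_image_of_mem f hx)
  rw [hgf hx] at hgf₁
  calc ‖g₁ (f₁ x) - x‖ = dist (g₁ (f₁ x)) x := (dist_eq_norm _ _).symm
    _ ≤ dist (g₁ (f₁ x)) (g (f₁ x)) + dist x (g (f₁ x)) := dist_triangle_right _ _ _
    _ ≤ ε := by linarith [hg₁g (f₁ x)]

lemma finrank_le_finrank_of_leftInvOn_closedBall {E F : Type*} [NormedAddCommGroup E]
    [InnerProductSpace ℝ E] [FiniteDimensional ℝ E] [NormedAddCommGroup F] [NormedSpace ℝ F]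
    [FiniteDimensional ℝ F] {f : E → F} {g : F → E} (hf : Continuous f) (hg : Continuous g)
    {r : ℝ} (hr : 0 < r) (hgf : LeftInvOn g f (closedBall 0 r)) :
    finrank ℝ E ≤ finrank ℝ F := by
  obtain ⟨f₁, g₁, hf₁, hg₁, hclose⟩ :=
    exists_contDiff_comp_norm_sub_le hf hg (isCompact_closedBall 0 r) hgf (half_pos hr)
  obtain ⟨x, -, hdet⟩ :=
    exists_det_fderiv_ne_zero_of_norm_sub_le (hg₁.comp hf₁) hr (half_lt_self hr) hclose
  rw [fderiv_comp x (hg₁.differentiable one_ne_zero _) (hf₁.differentiable one_ne_zero x)] at hdet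
  exact finrank_le_finrank_of_det_comp_ne_zero hdet

lemma exists_continuous_leftInvOn_of_isCompact {X : Type v} {Y : Type u} [TopologicalSpace X]
    [TopologicalSpace Y] [T4Space Y] [TietzeExtension.{u, v} X] {f : X → Y} {K : Set X}
    (hf : ContinuousOn f K) (hinj : InjOn f K) (hK : IsCompact K) :
    ∃ g : Y → X, Continuous g ∧ LeftInvOn g f K := by
  have := isCompact_iff_compactSpace.1 hK
  have hembedding : IsClosedEmbedding (K.domRestrict f) :=
    hf.domRestrict.isClosedEmbedding hinj.injective
  obtain ⟨g, hg⟩ := ContinuousMap.exists_extension' hembedding ⟨Subtype.val, continuous_subtype_val⟩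
  exact ⟨g, g.continuous, fun x hx ↦ congr_fun hg ⟨x, hx⟩⟩

section TopologicalVectorSpace

variable {E F : Type*} [AddCommGroup E] [Module ℝ E] [TopologicalSpace E]
  [IsTopologicalAddGroup E] [ContinuousSMul ℝ E] [AddCommGroup F] [Module ℝ F]
  [TopologicalSpace F] [IsTopologicalAddGroup F] [ContinuousSMul ℝ F] [T2Space F]
  [FiniteDimensional ℝ F] {f : E → F}

lemma finrank_le_finrank_of_continuous_of_injective [FiniteDimensional ℝ E] (hf : Continuous f)
    (hinj : Function.Injective f) : finrank ℝ E ≤ finrank ℝ F := by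
  have : T2Space E := .of_injective_continuous hinj hf
  let f₁ : EuclideanSpace ℝ (Fin (finrank ℝ E)) → EuclideanSpace ℝ (Fin (finrank ℝ F)) :=
    toEuclidean ∘ f ∘ toEuclidean.symm
  have hf₁ : Continuous f₁ :=
    toEuclidean.continuous.comp (hf.comp toEuclidean.symm.continuous)
  have hinj₁ : Function.Injective f₁ :=
    toEuclidean.injective.comp (hinj.comp toEuclidean.symm.injective)
  obtain ⟨g, hg, hgf⟩ := exists_continuous_leftInvOn_of_isCompact hf₁.continuousOn
    hinj₁.injOn (isCompact_closedBall 0 1)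
  simpa only [finrank_euclideanSpace_fin] using
    finrank_le_finrank_of_leftInvOn_closedBall hf₁ hg one_pos hgf

lemma finiteDimensional_of_continuous_of_injective (hf : Continuous f)
    (hinj : Function.Injective f) : FiniteDimensional ℝ E := by
  by_contra hE
  obtain ⟨b, hb⟩ : ∃ b : Fin (finrank ℝ F + 1) → E, LinearIndependent ℝ b :=
    exists_linearIndependent_of_le_rank
      (Cardinal.natCast_lt_aleph0.le.trans (not_lt.1 (mt Module.rank_lt_aleph0_iff.1 hE)))
  have := FiniteDimensional.span_of_finite ℝ (finite_range b)
  have hspan := finrank_le_finrank_of_continuous_of_injective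
    (hf.comp continuous_subtype_val) (hinj.comp (Submodule.span ℝ (range b)).injective_subtype)
  rw [finrank_span_eq_card hb, Fintype.card_fin] at hspan
  exact Nat.not_succ_le_self _ hspan

theorem euclidean_homeomorphic_iff_dim_eq_general (h : Nonempty (E ≃ₜ F)) :
    FiniteDimensional ℝ E ∧ finrank ℝ E = finrank ℝ F := by
  obtain ⟨e⟩ := h
  have hE : FiniteDimensional ℝ E := finiteDimensional_of_continuous_of_injective e.continuous
    e.injective
  have : T2Space E := e.symm.t2Space
  exact ⟨hE, (finrank_le_finrank_of_continuous_of_injective e.continuous e.injective).antisymm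
    (finrank_le_finrank_of_continuous_of_injective e.symm.continuous e.symm.injective)⟩

end TopologicalVectorSpace

end Dimension

theorem euclidean_homeomorphic_iff_dim_eq (n m : ℕ)
    (h : Nonempty (EuclideanSpace ℝ (Fin n) ≃ₜ EuclideanSpace ℝ (Fin m))) :
    n = m := by
  simpa only [finrank_euclideanSpace_fin] using
    (euclidean_homeomorphic_iff_dim_eq_general h).2
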